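/- arXiv:1103.2419 — 2 statements merged into one kernel-verified Lean document; each statement's English description precedes it below -/
import Mathlib

section
/- Let n ≥ 5, let f be a γ_R-function of the generalized Petersen graph P(n,2) with minimum cardinality of V₂, and let i be an integer. If r_f(V′(i,7)) ≤ 1/2, then u_{i+3} ∉ V₂ (indices modulo n). -/
/-!
The function `r_f` is nonnegative on every vertex, and `r_f(w) ≥ 1/2` exactly when `w` is *in excess*:
`w ∈ V₁`, or `w ∈ V₀` has at least two neighbours in `V₂`. So `r_f(V'(i,7)) ≤ 1/2` leaves room for at
most one excess vertex in the block, and for no `V₀` vertex with three neighbours in `V₂`.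

Minimality enters only through one fact (`eq_zero_of_adj_two`): every neighbour of a `V₂` vertex lies
in `V₀`. A `V₁` neighbour could be lowered to `0`; and if `v, u ∈ V₂` were adjacent, then lowering
`v` to `0` and raising its other two neighbours to at least `1` would not increase the weight but
would shrink `V₂`.

Put the origin at `i + 3` and suppose `u₀ ∈ V₂`, so `v₀, u₂, u₋₂ ∈ V₀`.
* If `v₁ ∈ V₂` then `v₀` is in excess. Since `u₁` is not in excess, `u₋₁ ∉ V₂`; as no further excess
  is allowed, `v₋₁ ∈ V₀`, and it can only be dominated by `v₋₂`. Then `u₋₂` is in excess too.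
  By reflection `v₋₁ ∉ V₂` as well.
* If `v₁, v₋₁ ∈ V₀`, then `v₁` is dominated by `u₁` or `v₂`, and `v₋₁` by `u₋₁` or `v₋₂`. Up to
  reflection the only admissible combination is `u₁, v₋₂ ∈ V₂`, which puts `u₋₂` in excess.
  Then `v₂` forces `v₃ ∈ V₂`, and `u₃` is in excess. For `n = 5` one has `u₃ = u₋₂`, a vertex
  with three neighbours in `V₂`.
* If `v₁ ∈ V₁`, then `v₁` is the excess vertex. Hence `v₋₁, v₋₂ ∈ V₀` (`v₋₂ ∈ V₂` would put `u₋₂` in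
  excess), so `u₋₁ ∈ V₂` dominates `v₋₁`, and `v₋₂` forces `v₋₃ ∈ V₂`, which puts `u₋₃` in excess.
-/

/-- The generalized Petersen graph `P(n,k)`: vertices `Sum.inl i` are the outer
vertices `v_i` and `Sum.inr i` are the inner vertices `u_i` (indices in `ZMod n`);
edges are `v_i v_{i+1}`, `v_i u_i` and `u_i u_{i+k}`. -/
def petersen (n k : ℕ) : SimpleGraph (ZMod n ⊕ ZMod n) :=
  SimpleGraph.fromRel fun a b =>
    match a, b with
    | Sum.inl i, Sum.inl j => j = i + 1
    | Sum.inl i, Sum.inr j => j = i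
    | Sum.inr i, Sum.inr j => j = i + (k : ZMod n)
    | _, _ => False

/-- `f` is a Roman domination function on `G`. -/
def IsRDF {V : Type*} (G : SimpleGraph V) (f : V → ℕ) : Prop :=
  (∀ v, f v ≤ 2) ∧ ∀ v, f v = 0 → ∃ u, G.Adj v u ∧ f u = 2

/-- The weight of a function on the vertices. -/
noncomputable def weight {V : Type*} (f : V → ℕ) : ℕ := ∑ᶠ v, f v

/-- The Roman domination number of `G`. -/
noncomputable def romanDomNum {V : Type*} (G : SimpleGraph V) : ℕ :=
  sInf {w | ∃ f : V → ℕ, IsRDF G f ∧ weight f = w}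

/-- `f` is a `γ_R`-function of `G`: an RDF of minimum weight. -/
def IsGammaRFun {V : Type*} (G : SimpleGraph V) (f : V → ℕ) : Prop :=
  IsRDF G f ∧ weight f = romanDomNum G

/-- `S` is a dominating set of `G`. -/
def IsDomSet {V : Type*} (G : SimpleGraph V) (S : Set V) : Prop :=
  ∀ v, v ∈ S ∨ ∃ u ∈ S, G.Adj u v

/-- The domination number of `G`. -/
noncomputable def domNum {V : Type*} (G : SimpleGraph V) : ℕ :=
  sInf {k | ∃ S : Set V, IsDomSet G S ∧ S.ncard = k}

/-- The function `g_f` associated to an RDF `f` on `P(n,2)`. -/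
noncomputable def gf (n : ℕ) (f : ZMod n ⊕ ZMod n → ℕ) (w : ZMod n ⊕ ZMod n) : ℚ :=
  if f w = 2 then 1/2
  else if f w = 1 then 1
  else (1/2) * (((petersen n 2).neighborSet w) ∩ {u | f u = 2}).ncard

/-- `r_f(S) = Σ_{w ∈ S} (g_f(w) - 1/2)`. -/
noncomputable def rfSum (n : ℕ) (f : ZMod n ⊕ ZMod n → ℕ) (S : Set (ZMod n ⊕ ZMod n)) : ℚ :=
  ∑ᶠ w ∈ S, (gf n f w - 1/2)

/-- The block `V'(i,t) = {v_j, u_j : i ≤ j ≤ i+t-1}`, indices modulo `n`. -/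
def Vblock (n : ℕ) (i : ℤ) (t : ℕ) : Set (ZMod n ⊕ ZMod n) :=
  {w | ∃ j : ℤ, i ≤ j ∧ j ≤ i + t - 1 ∧
    (w = Sum.inl ((j : ℤ) : ZMod n) ∨ w = Sum.inr ((j : ℤ) : ZMod n))}

/-- `f` has minimum cardinality of `V₂` among `γ_R`-functions of `P(n,2)`. -/
def MinV2 (n : ℕ) (f : ZMod n ⊕ ZMod n → ℕ) : Prop :=
  ∀ f' : ZMod n ⊕ ZMod n → ℕ, IsGammaRFun (petersen n 2) f' →
    {v | f v = 2}.ncard ≤ {v | f' v = 2}.ncard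

/-! ### Neighbours of vertices in `V₂` -/

lemma petersen_adj_inl_inl {n k : ℕ} {i j : ZMod n} :
    (petersen n k).Adj (Sum.inl i) (Sum.inl j) ↔ i ≠ j ∧ (j = i + 1 ∨ i = j + 1) := by
  simp [petersen]

lemma petersen_adj_inl_inr {n k : ℕ} {i j : ZMod n} :
    (petersen n k).Adj (Sum.inl i) (Sum.inr j) ↔ j = i := by
  simp [petersen]

lemma petersen_adj_inr_inl {n k : ℕ} {i j : ZMod n} :
    (petersen n k).Adj (Sum.inr i) (Sum.inl j) ↔ i = j := by
  simp [petersen]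

lemma petersen_adj_inr_inr {n k : ℕ} {i j : ZMod n} :
    (petersen n k).Adj (Sum.inr i) (Sum.inr j) ↔ i ≠ j ∧ (j = i + k ∨ i = j + k) := by
  simp [petersen]

/-- `P(n,k)` has maximum degree at most three, in the form needed for the exchange argument. -/
lemma petersen_other_neighbors {n k : ℕ} {v u : ZMod n ⊕ ZMod n} (h : (petersen n k).Adj v u) :
    ∃ x y, ∀ w, (petersen n k).Adj v w → w = u ∨ w = x ∨ w = y := by
  rcases v with i | i
  · have key : ∀ w, (petersen n k).Adj (Sum.inl i) w →
        w = Sum.inl (i + 1) ∨ w = Sum.inl (i - 1) ∨ w = Sum.inr i := by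
      rintro (j | j) hj
      · rcases (petersen_adj_inl_inl.1 hj).2 with h | h
        · simp [h]
        · simp [h]
      · simp [petersen_adj_inl_inr.1 hj]
    rcases key u h with rfl | rfl | rfl
    · exact ⟨_, _, key⟩
    · exact ⟨Sum.inl (i + 1), Sum.inr i, fun w hw => by have := key w hw; tauto⟩
    · exact ⟨Sum.inl (i + 1), Sum.inl (i - 1), fun w hw => by have := key w hw; tauto⟩
  · have key : ∀ w, (petersen n k).Adj (Sum.inr i) w →
        w = Sum.inr (i + k) ∨ w = Sum.inr (i - k) ∨ w = Sum.inl i := by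
      rintro (j | j) hj
      · simp [petersen_adj_inr_inl.1 hj]
      · rcases (petersen_adj_inr_inr.1 hj).2 with h | h
        · simp [h]
        · simp [h]
    rcases key u h with rfl | rfl | rfl
    · exact ⟨_, _, key⟩
    · exact ⟨Sum.inr (i + k), Sum.inl i, fun w hw => by have := key w hw; tauto⟩
    · exact ⟨Sum.inr (i + k), Sum.inr (i - k), fun w hw => by have := key w hw; tauto⟩

lemma IsGammaRFun.weight_le {V : Type*} {G : SimpleGraph V} {f f' : V → ℕ}
    (hf : IsGammaRFun G f) (h' : IsRDF G f') : weight f ≤ weight f' :=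
  hf.2 ▸ Nat.sInf_le ⟨f', h', rfl⟩

/-- No `V₁` vertex is adjacent to a `V₂` vertex: otherwise it could be lowered to `0`. -/
lemma IsGammaRFun.ne_one_of_adj_two {V : Type*} [Finite V] {G : SimpleGraph V} {f : V → ℕ}
    (hf : IsGammaRFun G f) {v u : V} (hvu : G.Adj v u) (hu : f u = 2) : f v ≠ 1 := by
  classical
  cases nonempty_fintype V
  intro hv
  have hR : IsRDF G (Function.update f v 0) := by
    refine ⟨fun w => ?_, fun w hw => ?_⟩
    · by_cases h : w = v
      · simp [h]
      · simpa [h] using hf.1.1 w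
    · by_cases h : w = v
      · subst h
        exact ⟨u, hvu, by rw [Function.update_of_ne hvu.ne', hu]⟩
      · rw [Function.update_of_ne h] at hw
        obtain ⟨z, hz, hz2⟩ := hf.1.2 w hw
        have : z ≠ v := by rintro rfl; omega
        exact ⟨z, hz, by rw [Function.update_of_ne this, hz2]⟩
  have h1 := hf.weight_le hR
  have h2 : weight (Function.update f v 0) < weight f := by
    simp only [weight, finsum_eq_sum_of_fintype]
    refine Finset.sum_lt_sum (fun w _ => ?_) ⟨v, Finset.mem_univ _, by simp [hv]⟩
    by_cases h : w = v
    · simp [h]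
    · simp [h]
  omega

/-- No two `V₂` vertices are adjacent when `|V₂|` is minimum. -/
lemma ne_two_of_adj_two {n : ℕ} [NeZero n] {f : ZMod n ⊕ ZMod n → ℕ}
    (hf : IsGammaRFun (petersen n 2) f) (hmin : MinV2 n f) {v u : ZMod n ⊕ ZMod n}
    (hvu : (petersen n 2).Adj v u) (hu : f u = 2) : f v ≠ 2 := by
  classical
  intro hv
  obtain ⟨x, y, hxy⟩ := petersen_other_neighbors hvu
  -- Remove `v` from `V₂`; it stays dominated by `u`, and its other neighbours `x, y` become positive.
  let f' : ZMod n ⊕ ZMod n → ℕ := fun w =>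
    if w = v then 0 else if f w = 0 ∧ (w = x ∨ w = y) then 1 else f w
  have two : ∀ w, w ≠ v → f w = 2 → f' w = 2 := by
    intro w h1 h2
    simp [f', h1, h2]
  have hR : IsRDF (petersen n 2) f' := by
    refine ⟨fun w => ?_, fun w hw => ?_⟩
    · have := hf.1.1 w
      simp only [f']
      split_ifs <;> omega
    · by_cases h : w = v
      · subst h
        exact ⟨u, hvu, two u hvu.ne' hu⟩
      · simp only [f', h, if_false] at hw
        split_ifs at hw with hc
        obtain ⟨z, hz, hz2⟩ := hf.1.2 w hw
        refine ⟨z, hz, two z ?_ hz2⟩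
        rintro rfl
        rcases hxy w hz.symm with rfl | hw'
        · omega
        · exact hc ⟨hw, hw'⟩
  have hle : weight f' ≤ weight f := by
    have hpt : ∀ w, f' w + (if w = v then 2 else 0) ≤
        f w + (if w = x then 1 else 0) + (if w = y then 1 else 0) := by
      intro w
      by_cases h : w = v
      · subst h
        simp [f', hv, add_assoc]
      · simp only [f', h, if_false]
        split_ifs <;> first | omega | tauto
    have := Finset.sum_le_sum (s := Finset.univ) fun w _ => hpt w
    simp only [Finset.sum_add_distrib, Finset.sum_ite_eq', Finset.mem_univ, if_true] at this
    simp only [weight, finsum_eq_sum_of_fintype]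
    omega
  have hG : IsGammaRFun (petersen n 2) f' :=
    ⟨hR, (le_antisymm hle (hf.weight_le hR)).trans hf.2⟩
  have hlt : {w | f' w = 2}.ncard < {w | f w = 2}.ncard := by
    refine Set.ncard_lt_ncard ⟨fun w hw => ?_, fun hsub => ?_⟩ (Set.toFinite _)
    · change f' w = 2 at hw
      change f w = 2
      simp only [f'] at hw
      split_ifs at hw
      · omega
      · exact hw
    · have : f' v = 2 := hsub hv
      simp [f'] at this
  exact absurd (hmin f' hG) (by omega)

lemma eq_zero_of_adj_two {n : ℕ} [NeZero n] {f : ZMod n ⊕ ZMod n → ℕ}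
    (hf : IsGammaRFun (petersen n 2) f) (hmin : MinV2 n f) {v u : ZMod n ⊕ ZMod n}
    (hvu : (petersen n 2).Adj v u) (hu : f u = 2) : f v = 0 := by
  have h1 := hf.ne_one_of_adj_two hvu hu
  have h2 := ne_two_of_adj_two hf hmin hvu hu
  have h3 := hf.1.1 v
  omega

/-! ### Lower bounds for `r_f` -/

lemma gf_of_eq_one {n : ℕ} {f : ZMod n ⊕ ZMod n → ℕ} {w : ZMod n ⊕ ZMod n} (h : f w = 1) :
    gf n f w = 1 := by
  simp [gf, h]

/-- Every finite family of `V₂` neighbours of a `V₀` vertex bounds `g_f` from below. -/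
lemma card_le_gf {n : ℕ} [NeZero n] {f : ZMod n ⊕ ZMod n → ℕ} {w : ZMod n ⊕ ZMod n} (h : f w = 0)
    (s : Finset (ZMod n ⊕ ZMod n)) (hs : ∀ z ∈ s, (petersen n 2).Adj w z ∧ f z = 2) :
    (s.card : ℚ) / 2 ≤ gf n f w := by
  have hsub : (s : Set (ZMod n ⊕ ZMod n)) ⊆ (petersen n 2).neighborSet w ∩ {u | f u = 2} :=
    fun z hz => hs z hz
  have := Set.ncard_le_ncard hsub (Set.toFinite _)
  rw [Set.ncard_coe_finset] at this
  have h' : (s.card : ℚ) ≤ (((petersen n 2).neighborSet w) ∩ {u | f u = 2}).ncard := by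
    exact_mod_cast this
  simp only [gf, h]
  norm_num
  linarith

lemma half_le_gf {n : ℕ} [NeZero n] {f : ZMod n ⊕ ZMod n → ℕ} (hf : IsRDF (petersen n 2) f)
    (w : ZMod n ⊕ ZMod n) : 1 / 2 ≤ gf n f w := by
  have := hf.1 w
  have h3 : f w = 0 ∨ f w = 1 ∨ f w = 2 := by omega
  rcases h3 with h | h | h
  · obtain ⟨u, hu⟩ := hf.2 w h
    simpa using card_le_gf h {u} (by simpa using hu)
  · rw [gf_of_eq_one h]
    norm_num
  · simp [gf, h]

lemma sum_le_rfSum {n : ℕ} [NeZero n] {f : ZMod n ⊕ ZMod n → ℕ} (hf : IsRDF (petersen n 2) f)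
    (S : Set (ZMod n ⊕ ZMod n)) (T : Finset (ZMod n ⊕ ZMod n)) (hT : ∀ w ∈ T, w ∈ S) :
    ∑ w ∈ T, (gf n f w - 1 / 2) ≤ rfSum n f S := by
  classical
  rw [rfSum, finsum_mem_eq_finite_toFinset_sum _ (Set.toFinite S)]
  refine Finset.sum_le_sum_of_subset_of_nonneg (fun w hw => by simpa using hT w hw) ?_
  intro w _ _
  linarith [half_le_gf hf w]

/-! ### Local analysis around the centre of the block -/

/-- At least two of the three propositions `p`, `q`, `r` hold. -/
def TwoOf (p q r : Prop) : Prop := p ∧ q ∨ p ∧ r ∨ q ∧ r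

/-- With `a k`, `b k` the values at the outer and inner vertices of index `k` relative to the centre
of the block, the vertex `v_k` is in excess: `r_f(v_k) ≥ 1/2`. -/
def ExcessA (a b : ℤ → ℕ) (k : ℤ) : Prop :=
  a k = 1 ∨ a k = 0 ∧ TwoOf (a (k - 1) = 2) (a (k + 1) = 2) (b k = 2)

/-- The vertex `u_k` is in excess: `r_f(u_k) ≥ 1/2`. -/
def ExcessB (a b : ℤ → ℕ) (k : ℤ) : Prop :=
  b k = 1 ∨ b k = 0 ∧ TwoOf (b (k - 2) = 2) (b (k + 2) = 2) (a k = 2)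

/-- What the argument uses about the values `a` (outer) and `b` (inner) of `f`, read along `ℤ` with
the centre of the block at `0`: `f` is a Roman domination function, the neighbours of `V₂` lie in
`V₀`, and the block of indices `-3, …, 3` has total excess at most `1/2`. -/
structure LocalFacts (n : ℤ) (a b : ℤ → ℕ) : Prop where
  five_le : 5 ≤ n
  per_a : ∀ k, a (k + n) = a k
  per_b : ∀ k, b (k + n) = b k
  le_a : ∀ k, a k ≤ 2
  le_b : ∀ k, b k ≤ 2
  dom_a : ∀ k, a k = 0 → a (k - 1) = 2 ∨ a (k + 1) = 2 ∨ b k = 2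
  dom_b : ∀ k, b k = 0 → b (k - 2) = 2 ∨ b (k + 2) = 2 ∨ a k = 2
  nbr_a : ∀ k, a k = 2 → a (k - 1) = 0 ∧ a (k + 1) = 0 ∧ b k = 0
  nbr_b : ∀ k, b k = 2 → b (k - 2) = 0 ∧ b (k + 2) = 0 ∧ a k = 0
  sep_aa : ∀ k l, -3 ≤ k → k < l → l ≤ 3 → l - k < n → ExcessA a b k → ¬ ExcessA a b l
  sep_bb : ∀ k l, -3 ≤ k → k < l → l ≤ 3 → l - k < n → ExcessB a b k → ¬ ExcessB a b l
  sep_ab : ∀ k l, -3 ≤ k → k ≤ 3 → -3 ≤ l → l ≤ 3 → ExcessA a b k → ¬ ExcessB a b l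
  triple_a : ∀ k, -3 ≤ k → k ≤ 3 → a k = 0 → ¬ (a (k - 1) = 2 ∧ a (k + 1) = 2 ∧ b k = 2)
  triple_b : ∀ k, -3 ≤ k → k ≤ 3 → b k = 0 → ¬ (b (k - 2) = 2 ∧ b (k + 2) = 2 ∧ a k = 2)

lemma ExcessA.neg {a b : ℤ → ℕ} {k : ℤ}
    (h : ExcessA (fun k => a (-k)) (fun k => b (-k)) k) : ExcessA a b (-k) := by
  simp only [ExcessA, TwoOf, neg_sub', neg_add', sub_neg_eq_add] at h ⊢
  tauto

lemma ExcessB.neg {a b : ℤ → ℕ} {k : ℤ}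
    (h : ExcessB (fun k => a (-k)) (fun k => b (-k)) k) : ExcessB a b (-k) := by
  simp only [ExcessB, TwoOf, neg_sub', neg_add', sub_neg_eq_add] at h ⊢
  tauto

/-- The reflection `k ↦ -k` of the block. -/
lemma LocalFacts.reflect {n : ℤ} {a b : ℤ → ℕ} (H : LocalFacts n a b) :
    LocalFacts n (fun k => a (-k)) (fun k => b (-k)) where
  five_le := H.five_le
  per_a k := by rw [← H.per_a (-(k + n))]; congr 1; ring
  per_b k := by rw [← H.per_b (-(k + n))]; congr 1; ring
  le_a k := H.le_a _
  le_b k := H.le_b _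
  dom_a k h := by
    have := H.dom_a _ h
    simp only [neg_sub', neg_add', sub_neg_eq_add]
    tauto
  dom_b k h := by
    have := H.dom_b _ h
    simp only [neg_sub', neg_add', sub_neg_eq_add]
    tauto
  nbr_a k h := by
    have := H.nbr_a _ h
    simp only [neg_sub', neg_add', sub_neg_eq_add]
    tauto
  nbr_b k h := by
    have := H.nbr_b _ h
    simp only [neg_sub', neg_add', sub_neg_eq_add]
    tauto
  sep_aa k l h1 h2 h3 h4 hk hl :=
    H.sep_aa (-l) (-k) (by omega) (by omega) (by omega) (by omega) hl.neg hk.neg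
  sep_bb k l h1 h2 h3 h4 hk hl :=
    H.sep_bb (-l) (-k) (by omega) (by omega) (by omega) (by omega) hl.neg hk.neg
  sep_ab k l h1 h2 h3 h4 hk hl :=
    H.sep_ab (-k) (-l) (by omega) (by omega) (by omega) (by omega) hk.neg hl.neg
  triple_a k h1 h2 h := by
    have := H.triple_a (-k) (by omega) (by omega) h
    simp only [neg_sub', neg_add', sub_neg_eq_add]
    tauto
  triple_b k h1 h2 h := by
    have := H.triple_b (-k) (by omega) (by omega) h
    simp only [neg_sub', neg_add', sub_neg_eq_add]
    tauto

namespace LocalFacts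

variable {n : ℤ} {a b : ℤ → ℕ}

/-- If `u₀ ∈ V₂`, then `v₁ ∉ V₂`: otherwise `v₀` is in excess,
and either `r_f(v₀) ≥ 1` or one of `u₁`, `v₋₁`, `u₋₂` is in excess as well. -/
lemma a_one_ne_two (H : LocalFacts n a b) (h0 : b 0 = 2) : a 1 ≠ 2 := by
  intro h1
  have hn := H.five_le
  have n0 := H.nbr_b 0 h0
  have n1 := H.nbr_a 1 h1
  norm_num at n0 n1
  have e0 : ExcessA a b 0 := by simp [ExcessA, TwoOf, n0, h0, h1]
  have hb : b (-1) ≠ 2 := fun h =>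
    H.sep_ab 0 1 (by omega) (by omega) (by omega) (by omega) e0 (by simp [ExcessB, TwoOf, n1, h, h1])
  have ha2 : a (-1) ≠ 2 := fun h =>
    H.triple_a 0 (by omega) (by omega) n0.2.2 (by simp [h, h1, h0])
  have ha1 : a (-1) ≠ 1 := fun h =>
    H.sep_aa (-1) 0 (by omega) (by omega) (by omega) (by omega) (Or.inl h) e0
  have d := H.dom_a (-1) (by have := H.le_a (-1); omega)
  norm_num [n0, hb] at d
  exact H.sep_ab 0 (-2) (by omega) (by omega) (by omega) (by omega) e0
    (by simp [ExcessB, TwoOf, n0, d, h0])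

/-- The configuration `u₀, u₁, v₋₂ ∈ V₂` is impossible: `u₋₂` is in excess, and `v₂` forces
`v₃ ∈ V₂`, so that `u₃` is in excess as well. -/
lemma not_b_one_and_a_neg_two (H : LocalFacts n a b) (h0 : b 0 = 2) (h1 : b 1 = 2)
    (h2 : a (-2) = 2) : False := by
  have hn := H.five_le
  have n0 := H.nbr_b 0 h0
  have n1 := H.nbr_b 1 h1
  norm_num at n0 n1
  have e : ExcessB a b (-2) := by simp [ExcessB, TwoOf, n0, h2, h0]
  have ha2 : a 2 ≠ 2 := fun h =>
    H.sep_bb (-2) 2 (by omega) (by omega) (by omega) (by omega) e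
      (by simp [ExcessB, TwoOf, n0, h, h0])
  have ha1 : a 2 ≠ 1 := fun h =>
    H.sep_ab 2 (-2) (by omega) (by omega) (by omega) (by omega) (Or.inl h) e
  have d := H.dom_a 2 (by have := H.le_a 2; omega)
  norm_num [n0, n1] at d
  rcases hn.eq_or_lt with rfl | hn
  · -- For `n = 5` the vertices `u₃` and `u₋₂` coincide, and all their neighbours lie in `V₂`.
    have p := H.per_b (-4)
    norm_num [h1] at p
    exact H.triple_b (-2) (by omega) (by omega) n0.1 (by simp [← p, h0, h2])
  · exact H.sep_bb (-2) 3 (by omega) (by omega) (by omega) (by omega) e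
      (by simp [ExcessB, TwoOf, n1, d, h1])

/-- If `u₀ ∈ V₂`, then `v₁ ∉ V₁`: otherwise `v₁` and `u₋₃` are both in excess. -/
lemma a_one_ne_one (H : LocalFacts n a b) (h0 : b 0 = 2) : a 1 ≠ 1 := by
  intro h1
  have hn := H.five_le
  have n0 := H.nbr_b 0 h0
  norm_num at n0
  have e : ExcessA a b 1 := Or.inl h1
  have hm2 : a (-1) ≠ 2 := H.reflect.a_one_ne_two h0
  have hm1 : a (-1) ≠ 1 := fun h =>
    H.sep_aa (-1) 1 (by omega) (by omega) (by omega) (by omega) (Or.inl h) e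
  have h2 : a (-2) ≠ 2 := fun h =>
    H.sep_ab 1 (-2) (by omega) (by omega) (by omega) (by omega) e
      (by simp [ExcessB, TwoOf, n0, h, h0])
  have h21 : a (-2) ≠ 1 := fun h =>
    H.sep_aa (-2) 1 (by omega) (by omega) (by omega) (by omega) (Or.inl h) e
  have d := H.dom_a (-1) (by have := H.le_a (-1); omega)
  norm_num [n0, h2] at d
  have nm := H.nbr_b (-1) d
  norm_num at nm
  have d2 := H.dom_a (-2) (by have := H.le_a (-2); omega)
  norm_num [n0, nm] at d2
  exact H.sep_ab 1 (-3) (by omega) (by omega) (by omega) (by omega) e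
    (by simp [ExcessB, TwoOf, nm, d, d2])

theorem b_zero_ne_two (H : LocalFacts n a b) : b 0 ≠ 2 := by
  intro h0
  have hn := H.five_le
  have n0 := H.nbr_b 0 h0
  norm_num at n0
  have p2 := H.a_one_ne_two h0
  have p1 := H.a_one_ne_one h0
  have m2 : a (-1) ≠ 2 := H.reflect.a_one_ne_two h0
  have m1 : a (-1) ≠ 1 := H.reflect.a_one_ne_one h0
  have dp := H.dom_a 1 (by have := H.le_a 1; omega)
  have dm := H.dom_a (-1) (by have := H.le_a (-1); omega)
  norm_num [n0] at dp dm
  rcases dp with dp | dp <;> rcases dm with dm | dm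
  · -- `v₂, v₋₂ ∈ V₂`: both `u₂` and `u₋₂` are in excess.
    exact H.sep_bb (-2) 2 (by omega) (by omega) (by omega) (by omega)
      (by simp [ExcessB, TwoOf, n0, dm, h0]) (by simp [ExcessB, TwoOf, n0, dp, h0])
  · exact H.reflect.not_b_one_and_a_neg_two h0 dm (by simpa using dp)
  · exact H.not_b_one_and_a_neg_two h0 dp dm
  · have := H.nbr_b (-1) dm
    norm_num at this
    omega

end LocalFacts

/-! ### The local facts for a minimum Roman domination function -/

/-- The index `i + 3 + k`, that is, `k` steps from the centre of the block `V'(i,7)`. -/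
def idx (n : ℕ) (i k : ℤ) : ZMod n := ((i + 3 + k : ℤ) : ZMod n)

lemma idx_ne {n : ℕ} {i k l : ℤ} (h : k < l) (h' : l - k < n) : idx n i k ≠ idx n i l := by
  intro he
  rw [idx, idx, ZMod.intCast_eq_intCast_iff_dvd_sub] at he
  have := Int.le_of_dvd (by omega) he
  omega

lemma idx_add {n : ℕ} {i k : ℤ} (m : ℤ) : idx n i (k + m) = idx n i k + m := by
  simp [idx, add_assoc]

lemma adj_outer {n : ℕ} (hn : 5 ≤ n) (i k : ℤ) :
    (petersen n 2).Adj (Sum.inl (idx n i k)) (Sum.inl (idx n i (k + 1))) :=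
  petersen_adj_inl_inl.2 ⟨idx_ne (by omega) (by omega), Or.inl (by simp [idx_add])⟩

lemma adj_inner {n : ℕ} (hn : 5 ≤ n) (i k : ℤ) :
    (petersen n 2).Adj (Sum.inr (idx n i k)) (Sum.inr (idx n i (k + 2))) :=
  petersen_adj_inr_inr.2 ⟨idx_ne (by omega) (by omega), Or.inl (by simp [idx_add])⟩

lemma adj_outer_sub {n : ℕ} (hn : 5 ≤ n) (i k : ℤ) :
    (petersen n 2).Adj (Sum.inl (idx n i k)) (Sum.inl (idx n i (k - 1))) := by
  simpa using (adj_outer hn i (k - 1)).symm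

lemma adj_inner_sub {n : ℕ} (hn : 5 ≤ n) (i k : ℤ) :
    (petersen n 2).Adj (Sum.inr (idx n i k)) (Sum.inr (idx n i (k - 2))) := by
  simpa using (adj_inner hn i (k - 2)).symm

lemma adj_spoke (n : ℕ) (i k : ℤ) :
    (petersen n 2).Adj (Sum.inl (idx n i k)) (Sum.inr (idx n i k)) :=
  petersen_adj_inl_inr.2 rfl

lemma neighbor_outer {n : ℕ} {i k : ℤ} {w : ZMod n ⊕ ZMod n}
    (h : (petersen n 2).Adj (Sum.inl (idx n i k)) w) :
    w = Sum.inl (idx n i (k - 1)) ∨ w = Sum.inl (idx n i (k + 1)) ∨ w = Sum.inr (idx n i k) := by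
  rcases w with j | j
  · rcases (petersen_adj_inl_inl.1 h).2 with h | h
    · simp [h, idx_add]
    · simp [sub_eq_add_neg, idx_add, h]
  · simp [petersen_adj_inl_inr.1 h]

lemma neighbor_inner {n : ℕ} {i k : ℤ} {w : ZMod n ⊕ ZMod n}
    (h : (petersen n 2).Adj (Sum.inr (idx n i k)) w) :
    w = Sum.inr (idx n i (k - 2)) ∨ w = Sum.inr (idx n i (k + 2)) ∨ w = Sum.inl (idx n i k) := by
  rcases w with j | j
  · simp [petersen_adj_inr_inl.1 h]
  · rcases (petersen_adj_inr_inr.1 h).2 with h | h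
    · simp [h, idx_add]
    · simp [sub_eq_add_neg, idx_add, h]

/-- Excess in terms of `g_f`: a `V₁` vertex, or a `V₀` vertex with at least two of three given
distinct neighbours in `V₂`, has `g_f ≥ 1`. -/
lemma one_le_gf {n : ℕ} [NeZero n] {f : ZMod n ⊕ ZMod n → ℕ} {w x y z : ZMod n ⊕ ZMod n}
    (hx : (petersen n 2).Adj w x) (hy : (petersen n 2).Adj w y) (hz : (petersen n 2).Adj w z)
    (hxy : x ≠ y) (hxz : x ≠ z) (hyz : y ≠ z)
    (h : f w = 1 ∨ f w = 0 ∧ TwoOf (f x = 2) (f y = 2) (f z = 2)) : 1 ≤ gf n f w := by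
  classical
  have pair : ∀ p q, (petersen n 2).Adj w p → (petersen n 2).Adj w q → p ≠ q → f w = 0 →
      f p = 2 → f q = 2 → 1 ≤ gf n f w := by
    intro p q hp hq hpq h0 hp2 hq2
    have := card_le_gf h0 {p, q} (by simp [hp, hq, hp2, hq2])
    rw [Finset.card_pair hpq] at this
    norm_num at this
    exact this
  rcases h with h | ⟨h0, ⟨h1, h2⟩ | ⟨h1, h2⟩ | ⟨h1, h2⟩⟩
  · rw [gf_of_eq_one h]
  · exact pair x y hx hy hxy h0 h1 h2
  · exact pair x z hx hz hxz h0 h1 h2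
  · exact pair y z hy hz hyz h0 h1 h2

lemma three_halves_le_gf {n : ℕ} [NeZero n] {f : ZMod n ⊕ ZMod n → ℕ} {w x y z : ZMod n ⊕ ZMod n}
    (hx : (petersen n 2).Adj w x) (hy : (petersen n 2).Adj w y) (hz : (petersen n 2).Adj w z)
    (hxy : x ≠ y) (hxz : x ≠ z) (hyz : y ≠ z) (h : f w = 0)
    (hx2 : f x = 2) (hy2 : f y = 2) (hz2 : f z = 2) : 3 / 2 ≤ gf n f w := by
  classical
  have := card_le_gf h {x, y, z} (by simp [hx, hy, hz, hx2, hy2, hz2])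
  rw [Finset.card_eq_three.2 ⟨x, y, z, hxy, hxz, hyz, rfl⟩] at this
  exact_mod_cast this

lemma localFacts {n : ℕ} [NeZero n] (hn : 5 ≤ n) {f : ZMod n ⊕ ZMod n → ℕ}
    (hf : IsGammaRFun (petersen n 2) f) (hmin : MinV2 n f) (i : ℤ)
    (h : rfSum n f (Vblock n i 7) ≤ 1 / 2) :
    LocalFacts n (fun k => f (Sum.inl (idx n i k))) (fun k => f (Sum.inr (idx n i k))) := by
  classical
  have memA : ∀ k, -3 ≤ k → k ≤ 3 → Sum.inl (idx n i k) ∈ Vblock n i 7 := fun k h1 h2 =>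
    ⟨i + 3 + k, by omega, by push_cast; omega, Or.inl rfl⟩
  have memB : ∀ k, -3 ≤ k → k ≤ 3 → Sum.inr (idx n i k) ∈ Vblock n i 7 := fun k h1 h2 =>
    ⟨i + 3 + k, by omega, by push_cast; omega, Or.inr rfl⟩
  have two : ∀ w z, w ∈ Vblock n i 7 → z ∈ Vblock n i 7 → w ≠ z → 1 ≤ gf n f w →
      ¬ 1 ≤ gf n f z := by
    intro w z hw hz hne h1 h2
    have := sum_le_rfSum hf.1 (Vblock n i 7) {w, z} (by simp [hw, hz])
    rw [Finset.sum_pair hne] at this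
    linarith
  have one : ∀ w, w ∈ Vblock n i 7 → ¬ 3 / 2 ≤ gf n f w := by
    intro w hw h1
    have := sum_le_rfSum hf.1 (Vblock n i 7) {w} (by simp [hw])
    rw [Finset.sum_singleton] at this
    linarith
  have neA : ∀ k : ℤ, (Sum.inl (idx n i (k - 1)) : ZMod n ⊕ ZMod n) ≠ Sum.inl (idx n i (k + 1)) :=
    fun k he => idx_ne (by omega) (by omega) (Sum.inl_injective he)
  have neB : ∀ k : ℤ, (Sum.inr (idx n i (k - 2)) : ZMod n ⊕ ZMod n) ≠ Sum.inr (idx n i (k + 2)) :=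
    fun k he => idx_ne (by omega) (by omega) (Sum.inr_injective he)
  have excA : ∀ k, ExcessA (fun k => f (Sum.inl (idx n i k))) (fun k => f (Sum.inr (idx n i k))) k →
      1 ≤ gf n f (Sum.inl (idx n i k)) := fun k he =>
    one_le_gf (adj_outer_sub hn i k) (adj_outer hn i k) (adj_spoke n i k) (neA k) (by simp)
      (by simp) he
  have excB : ∀ k, ExcessB (fun k => f (Sum.inl (idx n i k))) (fun k => f (Sum.inr (idx n i k))) k →
      1 ≤ gf n f (Sum.inr (idx n i k)) := fun k he =>
    one_le_gf (adj_inner_sub hn i k) (adj_inner hn i k) (adj_spoke n i k).symm (neB k) (by simp)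
      (by simp) he
  have zero : ∀ {v u : ZMod n ⊕ ZMod n}, (petersen n 2).Adj v u → f v = 2 → f u = 0 :=
    fun hvu hv => eq_zero_of_adj_two hf hmin hvu.symm hv
  exact
  { five_le := by exact_mod_cast hn
    per_a := fun k => by simp [idx_add]
    per_b := fun k => by simp [idx_add]
    le_a := fun k => hf.1.1 _
    le_b := fun k => hf.1.1 _
    dom_a := fun k hk => by
      obtain ⟨u, hu, hu2⟩ := hf.1.2 _ hk
      rcases neighbor_outer hu with rfl | rfl | rfl <;> simp [hu2]
    dom_b := fun k hk => by
      obtain ⟨u, hu, hu2⟩ := hf.1.2 _ hk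
      rcases neighbor_inner hu with rfl | rfl | rfl <;> simp [hu2]
    nbr_a := fun k hk =>
      ⟨zero (adj_outer_sub hn i k) hk, zero (adj_outer hn i k) hk, zero (adj_spoke n i k) hk⟩
    nbr_b := fun k hk =>
      ⟨zero (adj_inner_sub hn i k) hk, zero (adj_inner hn i k) hk, zero (adj_spoke n i k).symm hk⟩
    sep_aa := fun k l h1 h2 h3 h4 hk hl =>
      two _ _ (memA k h1 (by omega)) (memA l (by omega) h3)
        (fun he => idx_ne h2 h4 (Sum.inl_injective he)) (excA k hk) (excA l hl)
    sep_bb := fun k l h1 h2 h3 h4 hk hl =>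
      two _ _ (memB k h1 (by omega)) (memB l (by omega) h3)
        (fun he => idx_ne h2 h4 (Sum.inr_injective he)) (excB k hk) (excB l hl)
    sep_ab := fun k l h1 h2 h3 h4 hk hl =>
      two _ _ (memA k h1 h2) (memB l h3 h4) (by simp) (excA k hk) (excB l hl)
    triple_a := fun k h1 h2 h0 h3 =>
      one _ (memA k h1 h2) (three_halves_le_gf (adj_outer_sub hn i k) (adj_outer hn i k)
        (adj_spoke n i k) (neA k) (by simp) (by simp) h0 h3.1 h3.2.1 h3.2.2)
    triple_b := fun k h1 h2 h0 h3 =>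
      one _ (memB k h1 h2) (three_halves_le_gf (adj_inner_sub hn i k) (adj_inner hn i k)
        (adj_spoke n i k).symm (neB k) (by simp) (by simp) h0 h3.1 h3.2.1 h3.2.2) }

/-- If `r_f(V'(i,7)) ≤ 1/2`, then `u_{i+3} ∉ V₂`. -/
theorem u_i_add_3_not_in_V2 (n : ℕ) (hn : 5 ≤ n)
    (f : ZMod n ⊕ ZMod n → ℕ) (hf : IsGammaRFun (petersen n 2) f)
    (hmin : MinV2 n f) (i : ℤ)
    (h : rfSum n f (Vblock n i 7) ≤ 1/2) :
    f (Sum.inr ((i + 3 : ℤ) : ZMod n)) ≠ 2 := by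
  have : NeZero n := ⟨by omega⟩
  simpa [idx] using (localFacts hn hf hmin i h).b_zero_ne_two
end

section
/- Let n ≥ 5, let f be a γ_R-function of the generalized Petersen graph P(n,2) with minimum cardinality of V₂, and let i be an integer. If r_f(V′(i,7)) = 1/2, then either r_f(V′(i−7,7)) ≥ 1 and r_f(V′(i+7,7)) ≥ 3/2, or r_f(V′(i−7,7)) ≥ 3/2 and r_f(V′(i+7,7)) ≥ 1 (indices modulo n). -/
namespace RomanPetersen

/-! ### Labels and column search -/

/-- The values of a Roman domination function, as an enumerated type on which computation in the
kernel is cheap. -/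
inductive Label
  | zero
  | one
  | two

/-- The label of a natural number; every number from `2` on gets the label `two`. -/
def label : ℕ → Label
  | 0 => .zero
  | 1 => .one
  | _ => .two

/-- Indicator of the label `two`. -/
def isTwo : Label → ℕ
  | .two => 1
  | _ => 0

/-- Indicator of the label `one`. -/
def isOne : Label → ℕ
  | .one => 1
  | _ => 0

/-- Labels allowed at the ends of an edge: a `two` has only `zero`s next to it. -/
def compatible : Label → Label → Bool
  | .two, .zero => true
  | .two, _ => false
  | .one, .two => false
  | _, _ => true

lemma compatible_comm (a b : Label) : compatible a b = compatible b a := by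
  cases a <;> cases b <;> rfl

/-- The load of a vertex labelled `x` with neighbours labelled `a`, `b`, `c`. Between compatible
labels it is `1` for a `two`, `2` for a `one`, and the number of neighbouring `two`s for a
`zero`. -/
def load (x a b c : Label) : ℕ :=
  isTwo a + isTwo b + isTwo c + (isTwo x + 2 * isOne x)

/-- A column of the strip: the label of the outer vertex, then that of the inner one. -/
abbrev Column := Label × Label

/-- The columns whose two entries are compatible. -/
def columns : List Column :=
  [(.zero, .zero), (.zero, .one), (.zero, .two), (.one, .zero), (.one, .one), (.two, .zero)]

/-- The effect of putting the column `c` after the columns `l`, listed from the most recent one.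
It is `none` if this breaks a local rule. Otherwise it is the excess of the column two places
before `c`, whose neighbourhood is now complete, or `0` if fewer than four columns are present. -/
def cost (c : Column) : List Column → Option ℕ
  | c₁ :: c₂ :: c₃ :: c₄ :: _ =>
    bif compatible c.1 c₁.1 && compatible c.2 c₂.2 then
      match load c₂.1 c₁.1 c₃.1 c₂.2, load c₂.2 c.2 c₄.2 c₂.1 with
      | p + 1, q + 1 => some (p + q)
      | _, _ => none
    else none
  | c₁ :: c₂ :: _ => bif compatible c.1 c₁.1 && compatible c.2 c₂.2 then some 0 else none
  | c₁ :: _ => bif compatible c.1 c₁.1 then some 0 else none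
  | [] => some 0

/-- Does every way of adding `k` columns to `l` with total cost at most `b` lead to a list of
columns and a remaining budget that satisfy `goal`? -/
def extend : ℕ → List Column → ℕ → (List Column → ℕ → Bool) → Bool
  | 0, l, b, goal => goal l b
  | k + 1, l, b, goal => columns.all fun c =>
    match cost c l with
    | none => true
    | some e => bif Nat.ble e b then extend k (c :: l) (b - e) goal else true

/-- Four columns are chosen freely, then seven that give a block of excess exactly `1`, then seven
that give a next block of excess at most `2`. This excess must be exactly `2`, and continuing in
the other direction it must be impossible to keep the excess of the previous block at
most `2`. -/
def search : Bool :=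
  extend 4 [] 0 fun l _ => extend 7 l 1 fun l b => !(Nat.beq b 0) ||
    extend 7 l 2 fun l b => Nat.beq b 0 && extend 7 l.reverse 2 fun _ _ => false

lemma search_eq_true : search = true := by
  decide +kernel

end RomanPetersen

namespace RomanPetersen

/-! ### Labelled strips -/

/-- The load of the outer vertex in column `j`. -/
def loadOuter (F : ℤ → Column) (j : ℤ) : ℕ :=
  load (F j).1 (F (j + 1)).1 (F (j - 1)).1 (F j).2

/-- The load of the inner vertex in column `j`. -/
def loadInner (F : ℤ → Column) (j : ℤ) : ℕ :=
  load (F j).2 (F (j + 2)).2 (F (j - 2)).2 (F j).1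

/-- The excess of column `j`, which is twice its contribution to `r_f`. The subtraction does not
truncate when both loads are positive, as they are in an `IsStrip`. -/
def excess (F : ℤ → Column) (j : ℤ) : ℕ :=
  loadOuter F j + loadInner F j - 2

/-- A labelling of the doubly infinite strip (vertices `v_j`, `u_j` for `j : ℤ`, edges
`v_j v_{j+1}`, `v_j u_j`, `u_j u_{j+2}`) in which adjacent labels are compatible and every load
is positive. -/
structure IsStrip (F : ℤ → Column) : Prop where
  spoke : ∀ j, compatible (F j).1 (F j).2
  outer : ∀ j, compatible (F (j + 1)).1 (F j).1
  inner : ∀ j, compatible (F (j + 2)).2 (F j).2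
  loadOuter_pos : ∀ j, 1 ≤ loadOuter F j
  loadInner_pos : ∀ j, 1 ≤ loadInner F j

lemma IsStrip.reflect {F : ℤ → Column} (hF : IsStrip F) : IsStrip fun j => F (-j) where
  spoke j := hF.spoke _
  outer j := by
    rw [compatible_comm]; convert hF.outer (-(j + 1)) using 4; ring
  inner j := by
    rw [compatible_comm]; convert hF.inner (-(j + 2)) using 4; ring
  loadOuter_pos j := by
    refine (hF.loadOuter_pos (-j)).trans_eq ?_
    simp only [loadOuter, load, neg_add', neg_sub', sub_neg_eq_add]; ring
  loadInner_pos j := by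
    refine (hF.loadInner_pos (-j)).trans_eq ?_
    simp only [loadInner, load, neg_add', neg_sub', sub_neg_eq_add]; ring

lemma excess_reflect (F : ℤ → Column) (j : ℤ) :
    excess (fun j => F (-j)) j = excess F (-j) := by
  simp only [excess, loadOuter, loadInner, load, neg_add', neg_sub', sub_neg_eq_add]
  congr 1; ring

/-- The `m` columns of `F` ending at column `j`, the last one first. -/
def window (F : ℤ → Column) : ℤ → ℕ → List Column
  | _, 0 => []
  | j, m + 1 => F j :: window F (j - 1) m

lemma length_window (F : ℤ → Column) (j : ℤ) (m : ℕ) : (window F j m).length = m := by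
  induction m generalizing j with
  | zero => rfl
  | succ m ih => simp [window, ih]

lemma getElem_window (F : ℤ → Column) (j : ℤ) (m k : ℕ) (h : k < (window F j m).length) :
    (window F j m)[k] = F (j - k) := by
  induction m generalizing j k with
  | zero => simp [window] at h
  | succ m ih =>
    cases k with
    | zero => simp [window]
    | succ k =>
      simp only [window, List.getElem_cons_succ, ih]
      push_cast; congr 1; ring

lemma reverse_window (F : ℤ → Column) (j : ℤ) (m : ℕ) :
    (window F j m).reverse = window (fun i => F (-i)) (m - 1 - j) m := by
  apply List.ext_getElem
  · simp [length_window]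
  · intro k h₁ h₂
    have hk : k < m := by simpa [length_window] using h₂
    rw [List.getElem_reverse, getElem_window, getElem_window, length_window]
    congr 1
    omega

/-! ### Soundness of the search -/

lemma mem_columns {c : Column} (h : compatible c.1 c.2) : c ∈ columns := by
  obtain ⟨a, b⟩ := c
  cases a <;> cases b <;> simp_all [columns, compatible]

/-- In a strip the column following a window is never rejected by `cost`. -/
lemma cost_window {F : ℤ → Column} (hF : IsStrip F) (j : ℤ) (m : ℕ) :
    cost (F (j + 1)) (window F j m) = some (if 4 ≤ m then excess F (j - 1) else 0) := by
  have h₁ : compatible (F (j + 1)).1 (F j).1 = true := hF.outer j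
  have h₂ : compatible (F (j + 1)).2 (F (j - 1)).2 = true := by
    have := hF.inner (j - 1)
    rwa [show j - 1 + 2 = j + 1 by ring] at this
  match m with
  | 0 => rfl
  | 1 => simp [window, cost, h₁]
  | 2 => simp [window, cost, h₁, h₂]
  | 3 => simp [window, cost, h₁, h₂]
  | m + 4 =>
    have h₃ := hF.loadOuter_pos (j - 1)
    have h₄ := hF.loadInner_pos (j - 1)
    simp only [window, cost, h₁, h₂, Bool.and_self, cond_true, excess, loadOuter, loadInner,
      le_add_iff_nonneg_left, zero_le, if_true, sub_sub] at h₃ h₄ ⊢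
    rw [show j - 1 + 1 = j by ring] at *
    rw [show j - 1 + 2 = j + 1 by ring] at *
    norm_num at *
    obtain ⟨p, hp⟩ := Nat.exists_eq_add_of_le' h₃
    obtain ⟨q, hq⟩ := Nat.exists_eq_add_of_le' h₄
    rw [hp, hq]
    simp only [Option.some.injEq]
    omega

lemma extend_step {F : ℤ → Column} (hF : IsStrip F) {k m b : ℕ} {j : ℤ}
    {goal : List Column → ℕ → Bool} (h : extend (k + 1) (window F j m) b goal = true)
    (hb : (if 4 ≤ m then excess F (j - 1) else 0) ≤ b) :
    extend k (window F (j + 1) (m + 1)) (b - if 4 ≤ m then excess F (j - 1) else 0) goal = true := by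
  rw [extend, List.all_eq_true] at h
  have := h _ (mem_columns (hF.spoke (j + 1)))
  rw [cost_window hF] at this
  simpa [Nat.ble_eq.mpr hb, window] using this

/-- If a search through `k` more columns succeeds on a window of a strip, and the `k` columns of
the strip that become complete have total excess at most the budget, then `goal` holds for the
longer window and the remaining budget. -/
lemma extend_sound {F : ℤ → Column} (hF : IsStrip F) {k m b : ℕ} {j : ℤ}
    {goal : List Column → ℕ → Bool} (hm : 4 ≤ m) (h : extend k (window F j m) b goal = true)
    (hb : ∑ t ∈ Finset.range k, excess F (j - 1 + t) ≤ b) :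
    goal (window F (j + k) (m + k)) (b - ∑ t ∈ Finset.range k, excess F (j - 1 + t)) = true := by
  induction k generalizing j m b with
  | zero => simpa [extend] using h
  | succ k ih =>
    rw [Finset.sum_range_succ'] at hb ⊢
    have hs : ∑ t ∈ Finset.range k, excess F (j - 1 + (t + 1 : ℕ)) =
        ∑ t ∈ Finset.range k, excess F (j + 1 - 1 + t) :=
      Finset.sum_congr rfl fun t _ => by congr 1; push_cast; ring
    rw [hs] at hb ⊢
    simp only [Nat.cast_zero, add_zero] at hb ⊢
    have h' := extend_step hF h (by rw [if_pos hm]; omega)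
    rw [if_pos hm] at h'
    have := ih (by omega) h' (by omega)
    convert this using 2
    · push_cast; congr 1 <;> ring
    · omega

/-- If a block of a strip has excess `1`, then the next block has excess at least `2`, and if that
is an equality then the previous block has excess at least `3`. -/
lemma strip_next_block {F : ℤ → Column} (hF : IsStrip F) (i : ℤ)
    (h : ∑ t ∈ Finset.range 7, excess F (i + t) = 1) :
    2 ≤ ∑ t ∈ Finset.range 7, excess F (i + 7 + t) ∧
      (∑ t ∈ Finset.range 7, excess F (i + 7 + t) = 2 →
        3 ≤ ∑ t ∈ Finset.range 7, excess F (i - 7 + t)) := by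
  have h₀ : search = true := search_eq_true
  -- Four initial columns `i - 2, …, i + 1` make column `i` the first one with a charged excess.
  rw [search, show ([] : List Column) = window F (i - 3) 0 from rfl] at h₀
  have h₁ := extend_step hF h₀ (by simp)
  have h₂ := extend_step hF h₁ (by simp)
  have h₃ := extend_step hF h₂ (by simp)
  have h₄ := extend_step hF h₃ (by simp)
  rw [extend, show i - 3 + 1 + 1 + 1 + 1 = i + 1 by ring] at h₄
  have e₁ : i + 1 - 1 = i := by ring
  have h₅ := extend_sound hF (by norm_num) h₄ (by rw [e₁, h])
  rw [e₁, h] at h₅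
  have h₆ : extend 7 (window F (i + 8) 11) 2 (fun l b => Nat.beq b 0 &&
      extend 7 l.reverse 2 fun _ _ => false) = true := by
    simpa [show i + 1 + 7 = i + 8 by ring] using h₅
  have e₂ : i + 8 - 1 = i + 7 := by ring
  by_cases hr : ∑ t ∈ Finset.range 7, excess F (i + 7 + t) ≤ 2
  · have h₇ := extend_sound hF (by norm_num) h₆ (by rwa [e₂])
    -- Reversed, the window `i - 2, …, i + 15` is a window of the reflected strip whose next
    -- charged column is `i - 1`.
    rw [e₂, Bool.and_eq_true, reverse_window] at h₇
    have h₈ := Nat.eq_of_beq_eq_true h₇.1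
    refine ⟨by omega, fun _ => ?_⟩
    by_contra! hl
    have hs : ∑ t ∈ Finset.range 7, excess (fun i => F (-i))
        ((11 + 7 : ℕ) - 1 - (i + 8 + (7 : ℕ)) - 1 + t) =
        ∑ t ∈ Finset.range 7, excess F (i - 7 + t) := by
      rw [← Finset.sum_range_reflect]
      refine Finset.sum_congr rfl fun t ht => ?_
      rw [excess_reflect]
      congr 1
      have := Finset.mem_range.mp ht
      omega
    have := extend_sound hF.reflect (by norm_num) h₇.2 (by rw [hs]; omega)
    exact Bool.false_ne_true this
  · omega

/-- The two neighbours of a block of excess `1` have excess at least `2`, and at least one of them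
has excess at least `3`. -/
lemma strip_blocks {F : ℤ → Column} (hF : IsStrip F) (i : ℤ)
    (h : ∑ t ∈ Finset.range 7, excess F (i + t) = 1) :
    let L := ∑ t ∈ Finset.range 7, excess F (i - 7 + t)
    let R := ∑ t ∈ Finset.range 7, excess F (i + 7 + t)
    (2 ≤ L ∧ 3 ≤ R) ∨ (3 ≤ L ∧ 2 ≤ R) := by
  intro L R
  have h₁ := strip_next_block hF i h
  have hs : ∀ a : ℤ, ∑ t ∈ Finset.range 7, excess (fun i => F (-i)) (-a - 6 + t) =
      ∑ t ∈ Finset.range 7, excess F (a + t) := by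
    intro a
    rw [← Finset.sum_range_reflect]
    refine Finset.sum_congr rfl fun t ht => ?_
    rw [excess_reflect]
    congr 1
    have := Finset.mem_range.mp ht
    omega
  have h₂ := (strip_next_block hF.reflect (-i - 6) (by rw [hs, h])).1
  rw [show -i - 6 + 7 = -(i - 7) - 6 by ring, hs] at h₂
  change 2 ≤ R ∧ (R = 2 → 3 ≤ L) at h₁
  change 2 ≤ L at h₂
  omega

end RomanPetersen

namespace RomanPetersen

/-! ### Local structure of an optimal Roman domination function -/

lemma isTwo_label (k : ℕ) (hk : k ≤ 2) : isTwo (label k) = if k = 2 then 1 else 0 := by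
  interval_cases k <;> rfl

lemma romanDomNum_le {V : Type*} {G : SimpleGraph V} {f : V → ℕ} (h : IsRDF G f) :
    romanDomNum G ≤ weight f :=
  Nat.sInf_le ⟨f, h, rfl⟩

section Optimal

variable {V : Type*} [Fintype V] {G : SimpleGraph V} {f : V → ℕ}

/-- A `1` next to a `2` could be lowered to `0`. -/
lemma not_one_adj_two (hf : IsGammaRFun G f) {x y : V} (hxy : G.Adj x y) (hx : f x = 1) :
    f y ≠ 2 := by
  classical
  intro hy
  have hR : IsRDF G (Function.update f x 0) := by
    refine ⟨fun v => ?_, fun v hv => ?_⟩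
    · by_cases h : v = x
      · simp [h]
      · simpa [Function.update_of_ne h] using hf.1.1 v
    · by_cases h : v = x
      · subst h
        exact ⟨y, hxy, by rw [Function.update_of_ne hxy.ne', hy]⟩
      · rw [Function.update_of_ne h] at hv
        obtain ⟨u, hu, hu2⟩ := hf.1.2 v hv
        have : u ≠ x := by rintro rfl; omega
        exact ⟨u, hu, by rw [Function.update_of_ne this, hu2]⟩
  have h₁ := romanDomNum_le hR
  rw [← hf.2, weight, weight, finsum_eq_sum_of_fintype, finsum_eq_sum_of_fintype] at h₁
  have h₂ : ∑ v, Function.update f x 0 v < ∑ v, f v := by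
    refine Finset.sum_lt_sum (fun v _ => ?_) ⟨x, Finset.mem_univ _, by simp [hx]⟩
    by_cases h : v = x
    · simp [h]
    · simp [Function.update_of_ne h]
  omega

/-- In a graph of maximum degree at most three, if `f` is a `γ_R`-function with fewest `2`s, then
no two `2`s are adjacent: given such an edge `x y`, lower `x` to `0` and raise the neighbours of
`x` of value `0` to `1`. -/
lemma not_two_adj_two (hf : IsGammaRFun G f)
    (hmin : ∀ f' : V → ℕ, IsGammaRFun G f' → {v | f v = 2}.ncard ≤ {v | f' v = 2}.ncard)
    {x y : V} (hdeg : (G.neighborSet x).ncard ≤ 3) (hxy : G.Adj x y) (hx : f x = 2) :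
    f y ≠ 2 := by
  classical
  intro hy
  set f' : V → ℕ := fun z => if z = x then 0 else if G.Adj x z ∧ f z = 0 then 1 else f z with hf'
  have h2 : ∀ z, f' z = 2 ↔ z ≠ x ∧ f z = 2 := by
    intro z
    simp only [hf']
    split_ifs <;> simp_all
  have hR : IsRDF G f' := by
    refine ⟨fun v => ?_, fun v hv => ?_⟩
    · simp only [hf']
      have := hf.1.1 v
      split_ifs <;> omega
    · by_cases h : v = x
      · subst h
        exact ⟨y, hxy, (h2 y).2 ⟨hxy.ne', hy⟩⟩
      · have h0 : ¬ G.Adj x v ∧ f v = 0 := by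
          simp only [hf', h, if_false] at hv
          split_ifs at hv with h'
          exact ⟨fun ha => h' ⟨ha, hv⟩, hv⟩
        obtain ⟨u, hu, hu2⟩ := hf.1.2 v h0.2
        exact ⟨u, hu, (h2 u).2 ⟨by rintro rfl; exact h0.1 hu.symm, hu2⟩⟩
  have hw : weight f' ≤ weight f := by
    rw [weight, weight, finsum_eq_sum_of_fintype, finsum_eq_sum_of_fintype]
    have h₁ : ∀ z, f' z + (if z = x then 2 else 0) ≤
        f z + if z ∈ (G.neighborSet x \ {y}) then 1 else 0 := by
      intro z
      simp only [hf', Set.mem_sdiff, SimpleGraph.mem_neighborSet, Set.mem_singleton_iff]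
      by_cases hz : z = x
      · simp [hz, hx]
      · by_cases hzy : z = y
        · simp [hzy, hy, hxy.ne']
        · simp only [hz, hzy, if_false, not_false_eq_true, and_true]
          by_cases ha : G.Adj x z <;> by_cases h0 : f z = 0 <;> simp [ha, h0]
    have h₂ := Finset.sum_le_sum fun z (_ : z ∈ Finset.univ) => h₁ z
    rw [Finset.sum_add_distrib, Finset.sum_add_distrib, Finset.sum_ite_eq' Finset.univ x,
      if_pos (Finset.mem_univ _), ← Finset.card_filter] at h₂
    have h₃ : (Finset.univ.filter fun z => z ∈ (G.neighborSet x \ {y})).card =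
        (G.neighborSet x \ {y}).ncard := by
      rw [← Set.ncard_coe_finset]; congr 1; ext z; simp
    have h₄ := Set.ncard_sdiff_singleton_add_one (s := G.neighborSet x) (a := y) hxy
      (Set.toFinite _)
    omega
  have hγ : IsGammaRFun G f' := ⟨hR, le_antisymm (hw.trans_eq hf.2) (romanDomNum_le hR)⟩
  have hlt : {v | f' v = 2}.ncard < {v | f v = 2}.ncard := by
    refine Set.ncard_lt_ncard ⟨fun z hz => ((h2 z).1 hz).2, fun h => ?_⟩ (Set.toFinite _)
    exact ((h2 x).1 (h hx)).1 rfl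
  exact absurd (hmin f' hγ) (by omega)

lemma labels_compatible (hf : IsGammaRFun G f)
    (hmin : ∀ f' : V → ℕ, IsGammaRFun G f' → {v | f v = 2}.ncard ≤ {v | f' v = 2}.ncard)
    (hdeg : ∀ x, (G.neighborSet x).ncard ≤ 3) {x y : V} (hxy : G.Adj x y) :
    compatible (label (f x)) (label (f y)) = true := by
  have h₁ := not_one_adj_two hf hxy
  have h₂ := not_one_adj_two hf hxy.symm
  have h₃ := not_two_adj_two hf hmin (hdeg x) hxy
  have hx := hf.1.1 x
  have hy := hf.1.1 y
  generalize f x = a at *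
  generalize f y = b at *
  interval_cases a <;> interval_cases b <;> simp_all [label, compatible]

end Optimal

/-! ### Neighbourhoods in `P(n,2)` -/

lemma natCast_zmod_ne_zero {n : ℕ} (hn : 5 ≤ n) {k : ℕ} (h₀ : 0 < k) (hk : k < 5) :
    (k : ZMod n) ≠ 0 := by
  rw [Ne, ZMod.natCast_eq_zero_iff]
  exact fun h => absurd (Nat.le_of_dvd h₀ h) (by omega)

lemma zmod_small_ne {n : ℕ} (hn : 5 ≤ n) :
    (1 : ZMod n) ≠ 0 ∧ (2 : ZMod n) ≠ 0 ∧ (4 : ZMod n) ≠ 0 := by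
  refine ⟨?_, ?_, ?_⟩
  · exact_mod_cast natCast_zmod_ne_zero hn (k := 1) (by norm_num) (by norm_num)
  · exact_mod_cast natCast_zmod_ne_zero hn (k := 2) (by norm_num) (by norm_num)
  · exact_mod_cast natCast_zmod_ne_zero hn (k := 4) (by norm_num) (by norm_num)

lemma neighborSet_outer {n : ℕ} (hn : 5 ≤ n) (x : ZMod n) :
    (petersen n 2).neighborSet (.inl x) = {.inl (x + 1), .inl (x - 1), .inr x} := by
  have := (zmod_small_ne hn).1
  ext w
  rcases w with y | y
  · simp only [petersen, SimpleGraph.mem_neighborSet, SimpleGraph.fromRel_adj,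
      Set.mem_insert_iff, Set.mem_singleton_iff, Sum.inl.injEq, ne_eq, reduceCtorEq, or_false,
      eq_sub_iff_add_eq]
    constructor
    · rintro ⟨-, h | h⟩ <;> simp [h]
    · rintro (h | h)
      · exact ⟨by rw [h]; simpa using this, .inl h⟩
      · exact ⟨by rw [← h]; simpa using this, .inr h.symm⟩
  · simp [petersen]

lemma neighborSet_inner {n : ℕ} (hn : 5 ≤ n) (x : ZMod n) :
    (petersen n 2).neighborSet (.inr x) = {.inr (x + 2), .inr (x - 2), .inl x} := by
  have := (zmod_small_ne hn).2.1
  ext w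
  rcases w with y | y
  · simp [petersen, eq_comm]
  · simp only [petersen, SimpleGraph.mem_neighborSet, SimpleGraph.fromRel_adj, Nat.cast_ofNat,
      Set.mem_insert_iff, Set.mem_singleton_iff, Sum.inr.injEq, ne_eq, reduceCtorEq, or_false,
      eq_sub_iff_add_eq]
    constructor
    · rintro ⟨-, h | h⟩ <;> simp [h]
    · rintro (h | h)
      · exact ⟨by rw [h]; simpa using this, .inl h⟩
      · exact ⟨by rw [← h]; simpa using this, .inr h.symm⟩

lemma ncard_triple_le {α : Type*} (a b c : α) : ({a, b, c} : Set α).ncard ≤ 3 := by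
  have h₁ := Set.ncard_insert_le a {b, c}
  have h₂ := Set.ncard_insert_le b {c}
  rw [Set.ncard_singleton] at h₂
  omega

lemma ncard_neighborSet_le {n : ℕ} (hn : 5 ≤ n) (w : ZMod n ⊕ ZMod n) :
    ((petersen n 2).neighborSet w).ncard ≤ 3 := by
  rcases w with x | x
  · rw [neighborSet_outer hn]; exact ncard_triple_le _ _ _
  · rw [neighborSet_inner hn]; exact ncard_triple_le _ _ _

/-- At a vertex with neighbours `a`, `b`, `c` and compatible labels the load is positive, and
`r_f` is half of the load minus one. -/
lemma load_and_gf {n : ℕ} {f : ZMod n ⊕ ZMod n → ℕ} (hf : IsRDF (petersen n 2) f)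
    {w a b c : ZMod n ⊕ ZMod n} (hN : (petersen n 2).neighborSet w = {a, b, c})
    (hab : a ≠ b) (hac : a ≠ c) (hbc : b ≠ c)
    (hcomp : ∀ y, (petersen n 2).Adj w y → compatible (label (f w)) (label (f y)) = true) :
    1 ≤ load (label (f w)) (label (f a)) (label (f b)) (label (f c)) ∧
      gf n f w - 1 / 2 =
        ((load (label (f w)) (label (f a)) (label (f b)) (label (f c)) : ℕ) - 1 : ℚ) / 2 := by
  classical
  have hadj : ∀ y, (petersen n 2).Adj w y ↔ y = a ∨ y = b ∨ y = c := by
    intro y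
    rw [← SimpleGraph.mem_neighborSet, hN]; simp
  have ha := hcomp a ((hadj a).2 (by simp))
  have hb := hcomp b ((hadj b).2 (by simp))
  have hc := hcomp c ((hadj c).2 (by simp))
  have hdom := hf.2 w
  simp only [hadj] at hdom
  have hcard : ((petersen n 2).neighborSet w ∩ {u | f u = 2}).ncard =
      isTwo (label (f a)) + isTwo (label (f b)) + isTwo (label (f c)) := by
    rw [hN, isTwo_label _ (hf.1 a), isTwo_label _ (hf.1 b), isTwo_label _ (hf.1 c),
      show ({a, b, c} ∩ {u | f u = 2} : Set (ZMod n ⊕ ZMod n)) =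
        (({a, b, c} : Finset (ZMod n ⊕ ZMod n)).filter fun u => f u = 2 : Finset _) by
          ext; simp,
      Set.ncard_coe_finset, Finset.card_filter, Finset.sum_insert (by simp [hab, hac]),
      Finset.sum_insert (by simp [hbc]), Finset.sum_singleton, add_assoc]
  rw [gf, hcard, load]
  have h₀ := hf.1 w
  have h₁ := hf.1 a
  have h₂ := hf.1 b
  have h₃ := hf.1 c
  have hdom' : f w = 0 → f a = 2 ∨ f b = 2 ∨ f c = 2 := by
    intro h
    obtain ⟨u, rfl | rfl | rfl, hu⟩ := hdom h <;> simp [hu]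
  clear hdom hcard hcomp hadj
  generalize f w = p at *
  generalize f a = q at *
  generalize f b = r at *
  generalize f c = t at *
  interval_cases p <;> interval_cases q <;> interval_cases r <;> interval_cases t <;>
    simp_all [label, compatible, isTwo, isOne] <;> norm_num

end RomanPetersen

namespace RomanPetersen

/-! ### Pulling back to the strip -/

/-- The hypotheses on `f` for which the local structure of `P(n,2)` has been determined: a
`γ_R`-function with fewest `2`s. -/
structure IsMinimal (n : ℕ) (f : ZMod n ⊕ ZMod n → ℕ) : Prop where
  five_le : 5 ≤ n
  gamma : IsGammaRFun (petersen n 2) f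
  minV2 : MinV2 n f

section Pullback

variable {n : ℕ} {f : ZMod n ⊕ ZMod n → ℕ}

lemma IsMinimal.compatible (h : IsMinimal n f) {x y : ZMod n ⊕ ZMod n}
    (hxy : (petersen n 2).Adj x y) : compatible (label (f x)) (label (f y)) = true := by
  have : NeZero n := ⟨by have := h.five_le; omega⟩
  exact labels_compatible h.gamma h.minV2 (ncard_neighborSet_le h.five_le) hxy

lemma IsMinimal.load_outer (h : IsMinimal n f) (x : ZMod n) :
    1 ≤ load (label (f (.inl x))) (label (f (.inl (x + 1)))) (label (f (.inl (x - 1))))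
      (label (f (.inr x))) ∧
    gf n f (.inl x) - 1 / 2 = ((load (label (f (.inl x))) (label (f (.inl (x + 1))))
      (label (f (.inl (x - 1)))) (label (f (.inr x))) : ℕ) - 1 : ℚ) / 2 := by
  refine load_and_gf h.gamma.1 (neighborSet_outer h.five_le x) ?_ (by simp) (by simp)
    fun y hy => h.compatible hy
  rw [Ne, Sum.inl.injEq, ← sub_eq_zero]
  ring_nf
  exact (zmod_small_ne h.five_le).2.1

lemma IsMinimal.load_inner (h : IsMinimal n f) (x : ZMod n) :
    1 ≤ load (label (f (.inr x))) (label (f (.inr (x + 2)))) (label (f (.inr (x - 2))))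
      (label (f (.inl x))) ∧
    gf n f (.inr x) - 1 / 2 = ((load (label (f (.inr x))) (label (f (.inr (x + 2))))
      (label (f (.inr (x - 2)))) (label (f (.inl x))) : ℕ) - 1 : ℚ) / 2 := by
  refine load_and_gf h.gamma.1 (neighborSet_inner h.five_le x) ?_ (by simp) (by simp)
    fun y hy => h.compatible hy
  rw [Ne, Sum.inr.injEq, ← sub_eq_zero]
  ring_nf
  exact (zmod_small_ne h.five_le).2.2

/-- The `n`-periodic labelling of the strip induced by `f`. -/
def pullback (n : ℕ) (f : ZMod n ⊕ ZMod n → ℕ) (j : ℤ) : Column :=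
  (label (f (.inl (j : ZMod n))), label (f (.inr (j : ZMod n))))

lemma IsMinimal.isStrip (h : IsMinimal n f) : IsStrip (pullback n f) where
  spoke j := h.compatible <| by
    rw [← SimpleGraph.mem_neighborSet, neighborSet_outer h.five_le]; simp
  outer j := h.compatible <| by
    rw [← SimpleGraph.mem_neighborSet, neighborSet_outer h.five_le]; simp
  inner j := h.compatible <| by
    rw [← SimpleGraph.mem_neighborSet, neighborSet_inner h.five_le]; simp
  loadOuter_pos j := by
    simpa [loadOuter, pullback] using (h.load_outer (j : ZMod n)).1
  loadInner_pos j := by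
    simpa [loadInner, pullback] using (h.load_inner (j : ZMod n)).1

lemma IsMinimal.column_eq (h : IsMinimal n f) (j : ℤ) :
    (gf n f (.inl (j : ZMod n)) - 1 / 2) + (gf n f (.inr (j : ZMod n)) - 1 / 2) =
      (excess (pullback n f) j : ℚ) / 2 := by
  have h₁ := h.isStrip.loadOuter_pos j
  have h₂ := h.isStrip.loadInner_pos j
  have e₁ : gf n f (.inl (j : ZMod n)) - 1 / 2 = ((loadOuter (pullback n f) j : ℚ) - 1) / 2 := by
    simpa [loadOuter, pullback] using (h.load_outer (j : ZMod n)).2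
  have e₂ : gf n f (.inr (j : ZMod n)) - 1 / 2 = ((loadInner (pullback n f) j : ℚ) - 1) / 2 := by
    simpa [loadInner, pullback] using (h.load_inner (j : ZMod n)).2
  rw [e₁, e₂, excess, Nat.cast_sub (by omega)]
  push_cast
  ring

/-- For `n ≥ 7` the seven columns of a block are distinct. -/
lemma IsMinimal.rfSum_block (h : IsMinimal n f) (hn : 7 ≤ n) (i : ℤ) :
    rfSum n f (Vblock n i 7) =
      ((∑ t ∈ Finset.range 7, excess (pullback n f) (i + t) : ℕ) : ℚ) / 2 := by
  classical
  set T : Finset (ZMod n) := (Finset.range 7).image fun t : ℕ => ((i + t : ℤ) : ZMod n) with hT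
  have hV : Vblock n i 7 = (T.disjSum T : Finset _) := by
    have hmem : ∀ x : ZMod n, x ∈ T ↔ ∃ j : ℤ, i ≤ j ∧ j ≤ i + 7 - 1 ∧ x = (j : ZMod n) := by
      intro x
      simp only [hT, Finset.mem_image, Finset.mem_range]
      constructor
      · rintro ⟨t, ht, rfl⟩
        exact ⟨i + t, by omega, by omega, rfl⟩
      · rintro ⟨j, h₁, h₂, rfl⟩
        exact ⟨(j - i).toNat, by omega, by congr 1; omega⟩
    ext w
    rcases w with x | x <;> simp [Vblock, hmem]
  have hinj : Set.InjOn (fun t : ℕ => ((i + t : ℤ) : ZMod n)) (Finset.range 7) := by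
    intro a ha b hb hab
    simp only [Finset.coe_range, Set.mem_Iio] at ha hb
    have : ((a : ℕ) : ZMod n) = (b : ℕ) := by simpa using hab
    rw [ZMod.natCast_eq_natCast_iff] at this
    exact Nat.ModEq.eq_of_lt_of_lt this (by omega) (by omega)
  rw [rfSum, hV, finsum_mem_coe_finset, Finset.sum_disjSum, hT, Finset.sum_image hinj,
    Finset.sum_image hinj, ← Finset.sum_add_distrib]
  simp only [h.column_eq]
  rw [← Finset.sum_div]
  push_cast
  rfl

/-- The total excess is `4 |V₂| + 2 |V₁| - 2n`, because each `2` is seen by its three neighbours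
and by itself. This is even, so `r_f` of the whole graph is an integer. -/
lemma IsMinimal.rfSum_univ_ne (h : IsMinimal n f) : rfSum n f Set.univ ≠ 1 / 2 := by
  have : NeZero n := ⟨by have := h.five_le; omega⟩
  have hshift : ∀ (g : ZMod n → ℚ) (a : ZMod n), ∑ x, g (x + a) = ∑ x, g x := fun g a =>
    Equiv.sum_comp (Equiv.addRight a) g
  have hshift' : ∀ (g : ZMod n → ℚ) (a : ZMod n), ∑ x, g (x - a) = ∑ x, g x := fun g a =>
    Equiv.sum_comp (Equiv.subRight a) g
  rw [rfSum, finsum_mem_univ, finsum_eq_sum_of_fintype, Fintype.sum_sum_type]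
  simp only [(h.load_outer _).2, (h.load_inner _).2, load]
  push_cast
  rw [← Finset.sum_div, ← Finset.sum_div]
  simp only [Finset.sum_sub_distrib, Finset.sum_add_distrib, ← Finset.mul_sum,
    hshift (fun x => (isTwo (label (f (.inl x))) : ℚ)),
    hshift' (fun x => (isTwo (label (f (.inl x))) : ℚ)),
    hshift (fun x => (isTwo (label (f (.inr x))) : ℚ)),
    hshift' (fun x => (isTwo (label (f (.inr x))) : ℚ)),
    Finset.sum_const, Finset.card_univ, ZMod.card, nsmul_eq_mul, mul_one]
  intro he
  simp only [← Nat.cast_sum] at he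
  generalize ∑ x : ZMod n, isTwo (label (f (.inl x))) = a at he
  generalize ∑ x : ZMod n, isTwo (label (f (.inr x))) = b at he
  generalize ∑ x : ZMod n, isOne (label (f (.inl x))) = c at he
  generalize ∑ x : ZMod n, isOne (label (f (.inr x))) = d at he
  -- The two sides have different parity.
  have he' : (4 * a + 4 * b + 2 * c + 2 * d : ℚ) = 2 * n + 1 := by linarith
  have : 4 * a + 4 * b + 2 * c + 2 * d = 2 * n + 1 := by exact_mod_cast he'
  omega

end Pullback

lemma Vblock_eq_univ {n : ℕ} [NeZero n] (hn : n ≤ 7) (i : ℤ) : Vblock n i 7 = Set.univ := by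
  have key : ∀ x : ZMod n, ∃ j : ℤ, i ≤ j ∧ j ≤ i + (7 : ℕ) - 1 ∧ x = (j : ZMod n) := by
    intro x
    have hlt := ZMod.val_lt (x - (i : ZMod n))
    refine ⟨i + (x - (i : ZMod n)).val, by omega, by omega, ?_⟩
    push_cast
    rw [ZMod.natCast_zmod_val]
    ring
  refine Set.eq_univ_of_forall fun w => ?_
  rcases w with x | x <;> obtain ⟨j, h₁, h₂, rfl⟩ := key x
  · exact ⟨j, h₁, h₂, .inl rfl⟩
  · exact ⟨j, h₁, h₂, .inr rfl⟩

end RomanPetersen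

/-- If `r_f(V'(i,7)) = 1/2`, then either `r_f(V'(i−7,7)) ≥ 1` and
`r_f(V'(i+7,7)) ≥ 3/2`, or `r_f(V'(i−7,7)) ≥ 3/2` and `r_f(V'(i+7,7)) ≥ 1`. -/
theorem neighbor_blocks_of_low_weight_block (n : ℕ) (hn : 5 ≤ n)
    (f : ZMod n ⊕ ZMod n → ℕ) (hf : IsGammaRFun (petersen n 2) f)
    (hmin : MinV2 n f) (i : ℤ)
    (h : rfSum n f (Vblock n i 7) = 1/2) :
    (1 ≤ rfSum n f (Vblock n (i - 7) 7) ∧ 3/2 ≤ rfSum n f (Vblock n (i + 7) 7)) ∨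
    (3/2 ≤ rfSum n f (Vblock n (i - 7) 7) ∧ 1 ≤ rfSum n f (Vblock n (i + 7) 7)) := by
  have hm : RomanPetersen.IsMinimal n f := ⟨hn, hf, hmin⟩
  rcases lt_or_ge n 7 with h7 | h7
  · have : NeZero n := ⟨by omega⟩
    rw [RomanPetersen.Vblock_eq_univ h7.le] at h
    exact absurd h hm.rfSum_univ_ne
  · rw [hm.rfSum_block h7] at h
    rw [hm.rfSum_block h7, hm.rfSum_block h7]
    have h₁ : ∑ t ∈ Finset.range 7,
        RomanPetersen.excess (RomanPetersen.pullback n f) (i + t) = 1 := by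
      have : ((∑ t ∈ Finset.range 7,
          RomanPetersen.excess (RomanPetersen.pullback n f) (i + t) : ℕ) : ℚ) = 1 := by linarith
      exact_mod_cast this
    refine (RomanPetersen.strip_blocks hm.isStrip i h₁).imp ?_ ?_ <;> rintro ⟨hL, hR⟩ <;>
      qify at hL hR <;> push_cast <;> constructor <;> linarith
end
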